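/- For probability measures P, Q on a common measurable space, the chi-squared divergence of the n-fold product measures satisfies χ²(P^n, Q^n) = (1 + χ²(P, Q))^n - 1. -/

import Mathlib

open MeasureTheory
open scoped ENNReal Classical

/-- Chi-squared divergence `χ²(P,Q) = ∫ (dP/dQ - 1)² dQ` when `P ≪ Q`, and `∞` otherwise. -/

noncomputable def chiSq {Ω : Type*} [MeasurableSpace Ω] (P Q : Measure Ω) : ℝ≥0∞ :=
  if P ≪ Q then ∫⁻ x, ENNReal.ofReal (((P.rnDeriv Q x).toReal - 1) ^ 2) ∂Q else ⊤

lemma aux_lintegral_prod {Ω : Type*} [MeasurableSpace Ω] (Q : Measure Ω)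
    [IsProbabilityMeasure Q] (n : ℕ) (g : Fin n → Ω → ℝ≥0∞) (hg : ∀ i, Measurable (g i)) :
    ∫⁻ x, ∏ i, g i (x i) ∂(Measure.pi fun _ : Fin n => Q) = ∏ i, ∫⁻ x, g i x ∂Q := by
  induction n with
  | zero => simp
  | succ n ih =>
    have h := (measurePreserving_piFinSuccAbove (fun _ : Fin (n+1) => Q) 0).symm
    rw [← h.lintegral_comp (by fun_prop)]
    simp only [Fin.prod_univ_succ]
    rw [← ih (fun i => g i.succ) (fun i => hg _), ← lintegral_prod_mul (hg 0).aemeasurable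
      (Finset.measurable_prod _ fun i _ =>
        (hg i.succ).comp (measurable_pi_apply i)).aemeasurable]
    rfl

lemma aux_chiSq {Ω : Type*} [MeasurableSpace Ω] (P Q : Measure Ω)
    [IsProbabilityMeasure P] [IsProbabilityMeasure Q] (h : P ≪ Q) :
    1 + chiSq P Q = ∫⁻ x, (P.rnDeriv Q x) ^ 2 ∂Q := by
  have hm := Measure.measurable_rnDeriv P Q
  have h1 : ∫⁻ x, P.rnDeriv Q x ∂Q = 1 := by
    rw [Measure.lintegral_rnDeriv h, measure_univ]
  have key : ∫⁻ x, (ENNReal.ofReal (((P.rnDeriv Q x).toReal - 1) ^ 2)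
      + 2 * P.rnDeriv Q x) ∂Q = ∫⁻ x, ((P.rnDeriv Q x) ^ 2 + 1) ∂Q := by
    apply lintegral_congr_ae
    filter_upwards [Measure.rnDeriv_lt_top P Q] with x hx
    lift P.rnDeriv Q x to NNReal using hx.ne with f
    have e : (2 * (f : ℝ≥0∞)) = ENNReal.ofReal (2 * (f : ℝ)) := by
      rw [ENNReal.ofReal_mul (by norm_num)]; simp
    have e' : ((f : ℝ≥0∞) ^ 2 + 1) = ENNReal.ofReal ((f : ℝ) ^ 2 + 1) := by
      rw [ENNReal.ofReal_add (by positivity) (by norm_num), ENNReal.ofReal_pow (by positivity)]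
      simp
    rw [e, e', ENNReal.coe_toReal, ← ENNReal.ofReal_add (by positivity) (by positivity)]
    congr 1
    ring
  rw [lintegral_add_right _ (by fun_prop), lintegral_add_right _ (by fun_prop),
    lintegral_const_mul _ hm, h1] at key
  simp only [lintegral_const, measure_univ, mul_one] at key
  rw [chiSq, if_pos h]
  refine (ENNReal.add_left_inj ENNReal.one_ne_top).1 ?_
  rw [← key, add_comm 1, add_assoc, one_add_one_eq_two]

lemma aux_withDensity {Ω : Type*} [MeasurableSpace Ω] (P Q : Measure Ω)
    [IsProbabilityMeasure P] [IsProbabilityMeasure Q] (h : P ≪ Q) (n : ℕ) :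
    (Measure.pi fun _ : Fin n => P) = (Measure.pi fun _ : Fin n => Q).withDensity
      (fun x => ∏ i, P.rnDeriv Q (x i)) := by
  have hm := Measure.measurable_rnDeriv P Q
  refine Measure.pi_eq (μ := fun _ : Fin n => P) fun s hs => ?_
  rw [withDensity_apply _ (MeasurableSet.univ_pi hs),
    ← lintegral_indicator (MeasurableSet.univ_pi hs)]
  have : ∀ x : Fin n → Ω, (Set.univ.pi s).indicator (fun x => ∏ i, P.rnDeriv Q (x i)) x
      = ∏ i, (s i).indicator (P.rnDeriv Q) (x i) := by
    intro x
    by_cases hx : x ∈ Set.univ.pi s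
    · rw [Set.indicator_of_mem hx]
      exact Finset.prod_congr rfl fun i _ => (Set.indicator_of_mem (hx i trivial) _).symm
    · rw [Set.indicator_of_notMem hx]
      simp only [Set.mem_pi, not_forall] at hx
      obtain ⟨i, _, hi⟩ := hx
      exact (Finset.prod_eq_zero (Finset.mem_univ i) (Set.indicator_of_notMem hi _)).symm
  simp_rw [this]
  rw [aux_lintegral_prod Q n (fun i => (s i).indicator (P.rnDeriv Q))
    (fun i => hm.indicator (hs i))]
  refine Finset.prod_congr rfl fun i _ => ?_
  rw [lintegral_indicator (hs i), Measure.setLIntegral_rnDeriv h]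

/-- Tensorization: `χ²(Pⁿ, Qⁿ) = (1 + χ²(P,Q))ⁿ - 1`. -/
theorem stmt_8 {Ω : Type*} [MeasurableSpace Ω] (P Q : Measure Ω)
    [IsProbabilityMeasure P] [IsProbabilityMeasure Q] (n : ℕ) :
    chiSq (Measure.pi fun _ : Fin n => P) (Measure.pi fun _ : Fin n => Q)
      = (1 + chiSq P Q) ^ n - 1 := by
  have hm := Measure.measurable_rnDeriv P Q
  by_cases h : P ≪ Q
  · have hw := aux_withDensity P Q h n
    have hn : (Measure.pi fun _ : Fin n => P) ≪ (Measure.pi fun _ : Fin n => Q) := by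
      rw [hw]; exact withDensity_absolutelyContinuous _ _
    have hr : (Measure.pi fun _ : Fin n => P).rnDeriv (Measure.pi fun _ : Fin n => Q)
        =ᵐ[Measure.pi fun _ : Fin n => Q] fun x => ∏ i, P.rnDeriv Q (x i) := by
      rw [hw]; exact Measure.rnDeriv_withDensity _ (by fun_prop)
    have h2 : 1 + chiSq (Measure.pi fun _ : Fin n => P) (Measure.pi fun _ : Fin n => Q)
        = (1 + chiSq P Q) ^ n := by
      rw [aux_chiSq _ _ hn, aux_chiSq _ _ h]
      have := aux_lintegral_prod Q n (fun _ x => P.rnDeriv Q x ^ 2) (fun _ => by fun_prop)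
      rw [Finset.prod_const, Finset.card_univ, Fintype.card_fin] at this
      rw [← this]
      apply lintegral_congr_ae
      filter_upwards [hr] with x hx
      rw [hx, Finset.prod_pow]
    rw [← h2, ENNReal.add_sub_cancel_left ENNReal.one_ne_top]
  · rcases Nat.eq_zero_or_pos n with rfl | hpos
    · have e : (Measure.pi fun _ : Fin 0 => P) = (Measure.pi fun _ : Fin 0 => Q) := by
        rw [Measure.pi_of_empty, Measure.pi_of_empty]
      have h3 := aux_chiSq (Measure.pi fun _ : Fin 0 => P) (Measure.pi fun _ : Fin 0 => Q)
        (by rw [e])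
      have h4 : ∫⁻ x, ((Measure.pi fun _ : Fin 0 => P).rnDeriv
          (Measure.pi fun _ : Fin 0 => Q) x) ^ 2 ∂(Measure.pi fun _ : Fin 0 => Q) = 1 := by
        rw [e]
        rw [lintegral_congr_ae (g := fun _ => 1)]
        · simp
        · filter_upwards [Measure.rnDeriv_self (Measure.pi fun _ : Fin 0 => Q)] with x hx
          rw [hx]; simp
      rw [pow_zero, ← h4, ← h3, h3, h4]
      rw [h4] at h3
      have := ENNReal.add_sub_cancel_left (a := 1)
        (b := chiSq (Measure.pi fun _ : Fin 0 => P) (Measure.pi fun _ : Fin 0 => Q))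
        ENNReal.one_ne_top
      rw [h3] at this
      exact this.symm
    · have hn : ¬ (Measure.pi fun _ : Fin n => P) ≪ (Measure.pi fun _ : Fin n => Q) := by
        intro hac
        apply h
        have := hac.map (measurable_pi_apply (⟨0, hpos⟩ : Fin n))
        rwa [(measurePreserving_eval (fun _ : Fin n => P) _).map_eq,
          (measurePreserving_eval (fun _ : Fin n => Q) _).map_eq] at this
      rw [chiSq, if_neg hn, chiSq, if_neg h, add_top, ENNReal.top_pow hpos.ne']
      simp
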